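/- Let n : Fin 2 → ℝ be the null covector n = ![1, 1] (so η₂(n,n) = 0 and n 0 > 0), and let T : Matrix (Fin 2) (Fin 2) ℝ be defined by T a b = n a * n b. Then: (i) T ≠ 0; (ii) T satisfies the strict dominant energy condition: for all covectors ξ, ζ : Fin 2 → ℝ with η₂(ξ,ξ) > 0, ξ 0 > 0, η₂(ζ,ζ) > 0, ζ 0 > 0, one has ∑ a, ∑ b, T a b * ξ a * ζ b = (ξ 0 + ξ 1) * (ζ 0 + ζ 1) > 0; but (iii) T fails the strengthened dominant energy condition: for every covector ξ with η₂(ξ,ξ) > 0, the vector T.mulVec ξ satisfies η₂(T.mulVec ξ, T.mulVec ξ) = 0, so T.mulVec ξ is never timelike even though T ≠ 0. -/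

import Mathlib

/-- The 2-dimensional Minkowski inner product on `ℝ² = Fin 2 → ℝ`
(the inverse metric has the same components, so the same formula measures covectors). -/
def η₂ (u v : Fin 2 → ℝ) : ℝ :=
  u 0 * v 0 - u 1 * v 1

/-!
The contraction of `n ⊗ n` with `ξ` and `ζ` factors as `(n ⬝ᵥ ξ) * (n ⬝ᵥ ζ)`. If `n` is causal and
`ξ` timelike, the time term dominates in `n ⬝ᵥ ξ`, so co-oriented `ξ` and `ζ` give factors of
the same sign. But `n ⊗ n` maps every covector into the line spanned by `n`, and if `n` is null
that line contains no timelike vector.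
-/

open Matrix

theorem sum_sum_vecMulVec_mul_mul {ι κ R : Type*} [Fintype ι] [Fintype κ] [CommSemiring R]
    (u ξ : ι → R) (v ζ : κ → R) :
    ∑ a, ∑ b, vecMulVec u v a b * ξ a * ζ b = (u ⬝ᵥ ξ) * (v ⬝ᵥ ζ) := by
  simp only [dotProduct, Finset.sum_mul_sum, vecMulVec_apply, mul_assoc, mul_left_comm (v _)]

theorem mul_add_pos_of_abs_lt_abs {R : Type*} [CommRing R] [LinearOrder R]
    [IsStrictOrderedRing R] {a b : R} (h : |b| < |a|) : 0 < a * (a + b) := by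
  have ha : 0 < |a| := (abs_nonneg b).trans_lt h
  calc
    0 < |a| * |a| - |a| * |b| := sub_pos.mpr (mul_lt_mul_of_pos_left h ha)
    _ = a * a + -|a * b| := by rw [abs_mul_abs_self, abs_mul, sub_eq_add_neg]
    _ ≤ a * a + a * b := by gcongr; exact neg_abs_le _
    _ = a * (a + b) := (mul_add a a b).symm

theorem η₂_smul_smul (c d : ℝ) (u v : Fin 2 → ℝ) :
    η₂ (c • u) (d • v) = c * d * η₂ u v := by
  simp only [η₂, Pi.smul_apply, smul_eq_mul]
  ring

theorem η₂_self_nonneg_iff {u : Fin 2 → ℝ} : 0 ≤ η₂ u u ↔ |u 1| ≤ |u 0| := by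
  rw [η₂, sub_nonneg, abs_le_iff_mul_self_le]

theorem η₂_self_pos_iff {u : Fin 2 → ℝ} : 0 < η₂ u u ↔ |u 1| < |u 0| := by
  rw [η₂, sub_pos, abs_lt_iff_mul_self_lt]

theorem apply_zero_ne_zero_of_causal {u : Fin 2 → ℝ} (hu : u ≠ 0) (hcausal : 0 ≤ η₂ u u) :
    u 0 ≠ 0 := by
  intro hu₀
  have hu₁ : u 1 = 0 := by simpa [hu₀] using η₂_self_nonneg_iff.mp hcausal
  exact hu (funext (Fin.forall_fin_two.mpr ⟨hu₀, hu₁⟩))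

theorem apply_zero_mul_apply_zero_mul_dotProduct_pos {u ξ : Fin 2 → ℝ} (hu : u ≠ 0)
    (hcausal : 0 ≤ η₂ u u) (hξ : 0 < η₂ ξ ξ) : 0 < u 0 * ξ 0 * (u ⬝ᵥ ξ) := by
  have hu₀ : 0 < |u 0| := abs_pos.mpr (apply_zero_ne_zero_of_causal hu hcausal)
  have space_lt_time : |u 1 * ξ 1| < |u 0 * ξ 0| := by
    rw [abs_mul, abs_mul]
    exact mul_lt_mul_of_le_of_lt_of_nonneg_of_pos (η₂_self_nonneg_iff.mp hcausal)
      (η₂_self_pos_iff.mp hξ) (abs_nonneg _) hu₀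
  rw [vec2_dotProduct]
  exact mul_add_pos_of_abs_lt_abs space_lt_time

theorem dotProduct_mul_dotProduct_pos_of_cooriented {u ξ ζ : Fin 2 → ℝ} (hu : u ≠ 0)
    (hcausal : 0 ≤ η₂ u u) (hξ : 0 < η₂ ξ ξ) (hζ : 0 < η₂ ζ ζ) (hξζ : 0 < ξ 0 * ζ 0) :
    0 < (u ⬝ᵥ ξ) * (u ⬝ᵥ ζ) := by
  have hu₀ : u 0 ≠ 0 := apply_zero_ne_zero_of_causal hu hcausal
  have hfactor : 0 < u 0 ^ 2 * (ξ 0 * ζ 0) := by positivity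
  refine pos_of_mul_pos_right (a := u 0 ^ 2 * (ξ 0 * ζ 0)) ?_ hfactor.le
  calc
    0 < (u 0 * ξ 0 * (u ⬝ᵥ ξ)) * (u 0 * ζ 0 * (u ⬝ᵥ ζ)) :=
      mul_pos (apply_zero_mul_apply_zero_mul_dotProduct_pos hu hcausal hξ)
        (apply_zero_mul_apply_zero_mul_dotProduct_pos hu hcausal hζ)
    _ = u 0 ^ 2 * (ξ 0 * ζ 0) * ((u ⬝ᵥ ξ) * (u ⬝ᵥ ζ)) := by ring

theorem η₂_vecMulVec_mulVec_self {ι : Type*} [Fintype ι] (u : Fin 2 → ℝ) (v ξ : ι → ℝ) :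
    η₂ (vecMulVec u v *ᵥ ξ) (vecMulVec u v *ᵥ ξ) = (v ⬝ᵥ ξ) * (v ⬝ᵥ ξ) * η₂ u u := by
  rw [vecMulVec_mulVec, op_smul_eq_smul, η₂_smul_smul]

theorem strict_dec_strictly_weaker_than_strengthened_dec_general {n : Fin 2 → ℝ} (hn : n ≠ 0)
    (hnull : η₂ n n = 0) :
    vecMulVec n n ≠ 0 ∧
    (∀ ξ ζ : Fin 2 → ℝ, 0 < η₂ ξ ξ → 0 < η₂ ζ ζ → 0 < ξ 0 * ζ 0 →
      ∑ a, ∑ b, vecMulVec n n a b * ξ a * ζ b = (n ⬝ᵥ ξ) * (n ⬝ᵥ ζ) ∧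
      0 < (n ⬝ᵥ ξ) * (n ⬝ᵥ ζ)) ∧
    ∀ ξ : Fin 2 → ℝ, η₂ (vecMulVec n n *ᵥ ξ) (vecMulVec n n *ᵥ ξ) = 0 := by
  refine ⟨vecMulVec_ne_zero hn hn, fun ξ ζ hξ hζ hξζ => ⟨?contraction, ?positive⟩, fun ξ => ?null⟩
  case contraction => exact sum_sum_vecMulVec_mul_mul n ξ n ζ
  case positive => exact dotProduct_mul_dotProduct_pos_of_cooriented hn hnull.ge hξ hζ hξζ
  case null => rw [η₂_vecMulVec_mulVec_self, hnull, mul_zero]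

/-- The tensor `T^{ab} = n^a n^b` built from the null covector `n = ![1, 1]` is nonzero,
satisfies the strict dominant energy condition, but fails the strengthened dominant
energy condition: `T.mulVec ξ` is never timelike. -/
theorem strict_dec_strictly_weaker_than_strengthened_dec :
    ∀ n : Fin 2 → ℝ, n = ![1, 1] →
    ∀ T : Matrix (Fin 2) (Fin 2) ℝ, (∀ a b : Fin 2, T a b = n a * n b) →
    (η₂ n n = 0 ∧ n 0 > 0) ∧
    T ≠ 0 ∧
    (∀ ξ ζ : Fin 2 → ℝ, η₂ ξ ξ > 0 → ξ 0 > 0 → η₂ ζ ζ > 0 → ζ 0 > 0 →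
      (∑ a, ∑ b, T a b * ξ a * ζ b) = (ξ 0 + ξ 1) * (ζ 0 + ζ 1) ∧
      (ξ 0 + ξ 1) * (ζ 0 + ζ 1) > 0) ∧
    (∀ ξ : Fin 2 → ℝ, η₂ ξ ξ > 0 →
      η₂ (T.mulVec ξ) (T.mulVec ξ) = 0 ∧ ¬ η₂ (T.mulVec ξ) (T.mulVec ξ) > 0) := by
  intro n hn T hT
  obtain rfl : T = vecMulVec n n := Matrix.ext hT
  have hnull : η₂ n n = 0 := by simp [η₂, hn]
  have hdot (ξ : Fin 2 → ℝ) : n ⬝ᵥ ξ = ξ 0 + ξ 1 := by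
    rw [hn, vec2_dotProduct]; simp
  obtain ⟨hT_ne, hstrict, hT_null⟩ :=
    strict_dec_strictly_weaker_than_strengthened_dec_general (n := n) (by simp [hn]) hnull
  refine ⟨⟨hnull, by simp [hn]⟩, hT_ne, fun ξ ζ hξ hξ₀ hζ hζ₀ => ?_,
    fun ξ _ => ⟨hT_null ξ, (hT_null ξ).not_gt⟩⟩
  simpa only [hdot] using hstrict ξ ζ hξ hζ (mul_pos hξ₀ hζ₀)
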